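/- Let ζ : [0,∞) → ℝ be a solution of Cauchy's functional equation and let P = conv{0, v₁, …, v_r} be a two-dimensional polytope in ℝ² with the origin on its boundary and vertices 0, v₁, …, v_r labeled counter-clockwise. Define V°_ζ(P) = Σ_{i=2}^{r} [ζ(det(v_{i−1}, v_i))/det(v_{i−1}, v_i)]·(v_{i−1} − v_i). Then fv_ζ(P) = (1/2) ρ V°_ζ(P), where ρ is the counter-clockwise rotation by π/2 and fv_ζ is the facet vector. -/

import Mathlib

open scoped RealInnerProductSpace

noncomputable section

/-- Euclidean n-space. -/
abbrev E (n : ℕ) := EuclideanSpace ℝ (Fin n)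

/-- A (convex) polytope: convex hull of a nonempty finite set. -/
def IsPolytope {n : ℕ} (P : Set (E n)) : Prop :=
  ∃ S : Finset (E n), S.Nonempty ∧ P = convexHull ℝ (S : Set (E n))

/-- Support function. -/
def suppFn {n : ℕ} (P : Set (E n)) (u : E n) : ℝ :=
  sSup ((fun x => ⟪x, u⟫) '' P)

/-- The face of `P` in direction `u`. -/
def face {n : ℕ} (P : Set (E n)) (u : E n) : Set (E n) :=
  {x ∈ P | ⟪x, u⟫ = suppFn P u}

/-- Dimension of a set: rank of the direction of its affine span. -/
def polyDim {n : ℕ} (P : Set (E n)) : ℕ :=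
  Module.finrank ℝ (affineSpan ℝ P).direction

/-- The set of outer unit facet normals of `P`. -/
def normals {n : ℕ} (P : Set (E n)) : Set (E n) :=
  {u | ‖u‖ = 1 ∧ polyDim (face P u) = n - 1}

/-- `a_P(u)`: the (n-1)-dimensional Hausdorff measure of the facet `F(P,u)`. -/
def facetArea {n : ℕ} (P : Set (E n)) (u : E n) : ℝ :=
  (MeasureTheory.Measure.hausdorffMeasure ((n : ℝ) - 1) (face P u)).toReal

/-- `V(P,u)`: volume of the cone `conv{0, F(P,u)}`. -/
def coneVol {n : ℕ} (P : Set (E n)) (u : E n) : ℝ :=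
  (MeasureTheory.volume (convexHull ℝ ({0} ∪ face P u))).toReal

/-- Facet normals whose facet does not contain the origin in its affine hull. -/
def goodNormals {n : ℕ} (P : Set (E n)) : Set (E n) :=
  {u ∈ normals P | (0 : E n) ∉ affineSpan ℝ (face P u)}

/-- The facet vector `fv_ζ`. -/
def fv {n : ℕ} (ζ : ℝ → ℝ) (P : Set (E n)) : E n :=
  ∑ᶠ u ∈ goodNormals P, (ζ (coneVol P u) / suppFn P u) • u

/-- The linear action of a matrix on Euclidean space. -/
def act {n : ℕ} (M : Matrix (Fin n) (Fin n) ℝ) : E n →ₗ[ℝ] E n :=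
  Matrix.toEuclideanLin M

/-- Inverse transpose of a matrix. -/
def invT {n : ℕ} (M : Matrix (Fin n) (Fin n) ℝ) : Matrix (Fin n) (Fin n) ℝ :=
  (M⁻¹).transpose

/-- The `k`-dimensional standard simplex `T^k = conv{0, e₁, …, e_k}` in `ℝⁿ`. -/
def Tk (n k : ℕ) : Set (E n) :=
  convexHull ℝ ({0} ∪ (fun i : Fin n => EuclideanSpace.single i (1 : ℝ)) '' {i | (i : ℕ) < k})

/-- The 2×2 determinant of the matrix with columns `v, w`. -/
def det2 (v w : E 2) : ℝ := v 0 * w 1 - v 1 * w 0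

lemma inner2 (x y : E 2) : ⟪x, y⟫ = x 0 * y 0 + x 1 * y 1 := by
  rw [PiLp.inner_apply, Fin.sum_univ_two]
  simp [mul_comm]

/-- Rotation by a right angle. -/
abbrev rho : E 2 →ₗ[ℝ] E 2 := act !![0, -1; 1, 0]

lemma rho_zero (x : E 2) : rho x 0 = - x 1 := by
  simp [act, Matrix.toLpLin_apply, dotProduct, Fin.sum_univ_two]

lemma rho_one (x : E 2) : rho x 1 = x 0 := by
  simp [act, Matrix.toLpLin_apply, dotProduct, Fin.sum_univ_two]

lemma inner_rho (x a b : E 2) : ⟪x, rho (a - b)⟫ = det2 a x - det2 b x := by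
  rw [inner2, rho_zero, rho_one]; simp [det2]; ring

/-- Solving a two by two linear system by Cramer's rule. -/
lemma cramer (a b c : E 2) (h : det2 a b ≠ 0) :
    c = (det2 c b / det2 a b) • a + (det2 a c / det2 a b) • b := by
  ext i
  have h' : det2 a b ≠ 0 := h
  fin_cases i
  · simp; field_simp; simp [det2]; ring
  · simp; field_simp; simp [det2]; ring

/-- An extreme point is not a convex combination of other points. -/
lemma not_mem_hull_of_extreme {P S : Set (E 2)} (hP : Convex ℝ P) {x : E 2}
    (hx : x ∈ Set.extremePoints ℝ P) (hS : S ⊆ P) (hxS : x ∉ S) : x ∉ convexHull ℝ S := by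
  intro h
  have := ((hP.mem_extremePoints_iff_convex_sdiff).1 hx).2
  have h2 : convexHull ℝ S ⊆ P \ {x} :=
    convexHull_min (fun y hy => ⟨hS hy, fun e => hxS (by rw [Set.mem_singleton_iff] at e; exact e ▸ hy)⟩) this
  exact (h2 h).2 rfl

lemma mem_hull_triple (a b : E 2) {s t : ℝ} (hs : 0 ≤ s) (ht : 0 ≤ t) (hst : s + t ≤ 1) :
    s • a + t • b ∈ convexHull ℝ ({0, a, b} : Set (E 2)) := by
  have hc := convex_convexHull ℝ ({0, a, b} : Set (E 2))
  have h0 : (0 : E 2) ∈ convexHull ℝ ({0, a, b} : Set (E 2)) := subset_convexHull _ _ (by simp)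
  have ha : a ∈ convexHull ℝ ({0, a, b} : Set (E 2)) := subset_convexHull _ _ (by simp)
  have hb : b ∈ convexHull ℝ ({0, a, b} : Set (E 2)) := subset_convexHull _ _ (by simp)
  have := hc.sum_mem (t := Finset.univ) (w := ![1 - s - t, s, t]) (z := ![0, a, b])
    (by intro i _; fin_cases i <;> simp <;> linarith)
    (by simp [Fin.sum_univ_three]; ring) (by intro i _; fin_cases i <;> simpa)
  simpa [Fin.sum_univ_three] using this

/-- The standard triangle. -/
def stdTri : Set (E 2) := {x | 0 ≤ x 0 ∧ 0 ≤ x 1 ∧ x 0 + x 1 ≤ 1}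

lemma stdTri_prod : MeasureTheory.volume {p : ℝ × ℝ | 0 ≤ p.1 ∧ 0 ≤ p.2 ∧ p.1 + p.2 ≤ 1}
    = ENNReal.ofReal (1 / 2) := by
  have hm : MeasurableSet {p : ℝ × ℝ | 0 ≤ p.1 ∧ 0 ≤ p.2 ∧ p.1 + p.2 ≤ 1} := by
    apply IsClosed.measurableSet
    exact (isClosed_le continuous_const continuous_fst).inter
      ((isClosed_le continuous_const continuous_snd).inter
        (isClosed_le (continuous_fst.add continuous_snd) continuous_const))
  rw [MeasureTheory.Measure.volume_eq_prod, MeasureTheory.Measure.prod_apply hm]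
  have : ∀ x : ℝ, MeasureTheory.volume
      (Prod.mk x ⁻¹' {p : ℝ × ℝ | 0 ≤ p.1 ∧ 0 ≤ p.2 ∧ p.1 + p.2 ≤ 1})
      = (Set.Icc (0:ℝ) 1).indicator (fun x => ENNReal.ofReal (1 - x)) x := by
    intro x
    by_cases hx : 0 ≤ x
    · have e : Prod.mk x ⁻¹' {p : ℝ × ℝ | 0 ≤ p.1 ∧ 0 ≤ p.2 ∧ p.1 + p.2 ≤ 1}
          = Set.Icc 0 (1 - x) := by
        ext y; simp only [Set.mem_preimage, Set.mem_ofPred_eq, Set.mem_Icc]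
        constructor
        · rintro ⟨_, h, h'⟩; exact ⟨h, by linarith⟩
        · rintro ⟨h, h'⟩; exact ⟨hx, h, by linarith⟩
      rw [e, Real.volume_Icc]
      by_cases hx1 : x ≤ 1
      · rw [Set.indicator_of_mem (show x ∈ Set.Icc (0:ℝ) 1 from ⟨hx, hx1⟩)]; simp
      · rw [Set.indicator_of_notMem (fun h => hx1 h.2)]
        exact ENNReal.ofReal_of_nonpos (by linarith)
    · have e : Prod.mk x ⁻¹' {p : ℝ × ℝ | 0 ≤ p.1 ∧ 0 ≤ p.2 ∧ p.1 + p.2 ≤ 1} = ∅ := by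
        ext y; simp [hx]
      rw [e, Set.indicator_of_notMem (fun h => hx h.1)]; simp
  simp_rw [this]
  rw [MeasureTheory.lintegral_indicator measurableSet_Icc,
    ← MeasureTheory.ofReal_integral_eq_lintegral_ofReal]
  · congr 1
    rw [MeasureTheory.integral_Icc_eq_integral_Ioc, ← intervalIntegral.integral_of_le zero_le_one]
    rw [intervalIntegral.integral_sub (by simp) (by simp)]; simp; norm_num
  · exact (Continuous.continuousOn (by fun_prop)).integrableOn_Icc
  · filter_upwards [MeasureTheory.ae_restrict_mem measurableSet_Icc] with x hx
    simpa using hx.2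

lemma stdTri_vol : MeasureTheory.volume stdTri = ENNReal.ofReal (1 / 2) := by
  rw [← stdTri_prod]
  have h1 := (MeasureTheory.volume_preserving_finTwoArrow ℝ).comp
    (PiLp.volume_preserving_ofLp (Fin 2))
  rw [← h1.measure_preimage]
  · rfl
  · apply IsClosed.nullMeasurableSet
    exact (isClosed_le continuous_const continuous_fst).inter
      ((isClosed_le continuous_const continuous_snd).inter
        (isClosed_le (continuous_fst.add continuous_snd) continuous_const))

lemma triangle_vol (a b : E 2) (h : 0 < det2 a b) :
    (MeasureTheory.volume (convexHull ℝ ({0, a, b} : Set (E 2)))).toReal = det2 a b / 2 := by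
  set M : Matrix (Fin 2) (Fin 2) ℝ := !![a 0, b 0; a 1, b 1] with hM
  have hL : ∀ x : E 2, act M x = x 0 • a + x 1 • b := by
    intro x
    ext i
    fin_cases i <;>
    simp [act, hM, Matrix.toLpLin_apply, dotProduct, Fin.sum_univ_two, mul_comm]
  have himg : convexHull ℝ ({0, a, b} : Set (E 2)) = act M '' stdTri := by
    apply Set.Subset.antisymm
    · apply convexHull_min
      · rintro x (rfl | rfl | rfl)
        · exact ⟨0, by simp [stdTri], by simp⟩
        · exact ⟨!₂[1, 0], by simp [stdTri], by rw [hL]; simp⟩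
        · exact ⟨!₂[0, 1], by simp [stdTri], by rw [hL]; simp⟩
      · apply Convex.linear_image
        rintro x ⟨hx0, hx1, hx2⟩ y ⟨hy0, hy1, hy2⟩ s t hs ht hst
        refine ⟨?_, ?_, ?_⟩
        · simp; positivity
        · simp; positivity
        · simp; nlinarith
    · rintro _ ⟨x, ⟨h0, h1, h2⟩, rfl⟩
      rw [hL]
      exact mem_hull_triple a b h0 h1 h2
  have hdet : LinearMap.det (act M) = det2 a b := by
    rw [act, Matrix.toEuclideanLin_eq_toLin_orthonormal, LinearMap.det_toLin, Matrix.det_fin_two]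
    simp [hM, det2]; ring
  rw [himg, MeasureTheory.Measure.addHaar_image_linearMap, hdet, stdTri_vol, abs_of_pos h,
    ← ENNReal.ofReal_mul h.le, ENNReal.toReal_ofReal (by positivity)]
  ring

lemma le_suppFn {P : Set (E 2)} (hP : IsCompact P) (u : E 2) {x : E 2} (hx : x ∈ P) :
    ⟪x, u⟫ ≤ suppFn P u :=
  le_csSup ((hP.image (by fun_prop : Continuous fun x : E 2 => ⟪x, u⟫)).bddAbove) ⟨x, hx, rfl⟩

lemma suppFn_eq {P : Set (E 2)} (u : E 2) {x : E 2} (hx : x ∈ P)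
    (h : ∀ y ∈ P, ⟪y, u⟫ ≤ ⟪x, u⟫) : suppFn P u = ⟪x, u⟫ :=
  IsGreatest.csSup_eq ⟨⟨x, hx, rfl⟩, by rintro _ ⟨y, hy, rfl⟩; exact h y hy⟩

lemma face_exposed {P : Set (E 2)} (hP : IsCompact P) (u : E 2) : IsExposed ℝ P (face P u) := by
  rintro ⟨z, hz, hz'⟩
  refine ⟨innerSL ℝ u, ?_⟩
  ext x
  simp only [face, Set.mem_ofPred_eq, innerSL_apply_apply]
  constructor
  · rintro ⟨hx, hx'⟩
    refine ⟨hx, fun y hy => ?_⟩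
    rw [real_inner_comm, real_inner_comm x u, hx']
    exact le_suppFn hP u hy
  · rintro ⟨hx, hx'⟩
    refine ⟨hx, le_antisymm (le_suppFn hP u hx) ?_⟩
    rw [← hz', real_inner_comm, real_inner_comm u x]
    exact hx' z hz

/-- A face is contained in any closed convex set that contains the vertices on the face. -/
lemma face_subset {P C : Set (E 2)} (hP : IsCompact P) (hPc : Convex ℝ P) (u : E 2)
    (hC : Convex ℝ C) (hC' : IsClosed C)
    (h : ∀ x ∈ Set.extremePoints ℝ P, ⟪x, u⟫ = suppFn P u → x ∈ C) : face P u ⊆ C := by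
  have he := face_exposed hP u
  rw [← closure_convexHull_extremePoints (he.isCompact hP) (he.convex hPc)]
  apply closure_minimal _ hC'
  apply convexHull_min _ hC
  intro x hx
  exact h x (he.isExtreme.extremePoints_subset_extremePoints hx) (extremePoints_subset hx).2

/-- The strict angular order of the vertices. -/
lemma angular {r : ℕ} {v : ℕ → E 2} {P : Set (E 2)} (hPc : Convex ℝ P)
    (hvert : Set.extremePoints ℝ P = {0} ∪ v '' Set.Icc 1 r) (hr : 2 ≤ r)
    (hccw : ∀ i : ℕ, 2 ≤ i → i ≤ r → 0 < det2 (v (i - 1)) (v i)) :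
    ∀ i j : ℕ, 1 ≤ i → i < j → j ≤ r → 0 < det2 (v i) (v j) := by
  have hv0 : ∀ i, 1 ≤ i → i ≤ r → v i ≠ 0 := by
    intro i h1 h2 h0
    rcases Nat.lt_or_ge i 2 with h | h
    · have := hccw (i + 1) (by omega) (by omega)
      simp [h0, det2] at this
    · have := hccw i h h2
      simp [h0, det2] at this
  have h0 : (0 : E 2) ∈ Set.extremePoints ℝ P := by rw [hvert]; simp
  have hsub : v '' Set.Icc 1 r ⊆ P := by
    refine Set.Subset.trans ?_ (extremePoints_subset (𝕜 := ℝ))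
    rw [hvert]; exact Set.subset_union_right
  have hn := not_mem_hull_of_extreme hPc h0 hsub (by
    rintro ⟨i, hi, h⟩; exact hv0 i hi.1 hi.2 h)
  have hcpt : IsCompact (convexHull ℝ (v '' Set.Icc 1 r)) :=
    ((Set.finite_Icc 1 r).image v).isCompact_convexHull ℝ
  obtain ⟨f, c, hf0, hf⟩ := geometric_hahn_banach_point_closed (convex_convexHull ℝ _)
    hcpt.isClosed hn
  rw [map_zero] at hf0
  have hfv : ∀ i, 1 ≤ i → i ≤ r → 0 < f (v i) := fun i h1 h2 =>
    hf0.trans (hf _ (subset_convexHull _ _ ⟨i, ⟨h1, h2⟩, rfl⟩))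
  obtain ⟨p, hp⟩ : ∃ p : E 2, ∀ x, f x = p 0 * x 0 + p 1 * x 1 := by
    refine ⟨(InnerProductSpace.toDual ℝ (E 2)).symm f, fun x => ?_⟩
    rw [← inner2, InnerProductSpace.toDual_symm_apply]
  have hpp : 0 < p 0 ^ 2 + p 1 ^ 2 := by
    by_contra hcon
    have e0 : p 0 = 0 := by nlinarith [sq_nonneg (p 0), sq_nonneg (p 1)]
    have e1 : p 1 = 0 := by nlinarith [sq_nonneg (p 0), sq_nonneg (p 1)]
    have := hfv 1 le_rfl (by omega)
    rw [hp, e0, e1] at this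
    simp at this
  have key : ∀ a b : E 2, det2 p b * f a - det2 p a * f b = (p 0 ^ 2 + p 1 ^ 2) * det2 a b := by
    intro a b; rw [hp, hp]; simp only [det2]; ring
  have iff1 : ∀ i j, 1 ≤ i → i ≤ r → 1 ≤ j → j ≤ r →
      (0 < det2 (v i) (v j) ↔ det2 p (v i) / f (v i) < det2 p (v j) / f (v j)) := by
    intro i j hi hi' hj hj'
    rw [div_lt_div_iff₀ (hfv i hi hi') (hfv j hj hj'), ← sub_pos (b := det2 p (v i) * f (v j)), key]
    exact (mul_pos_iff_of_pos_left hpp).symm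
  intro i j hi hij
  induction j, hij using Nat.le_induction with
  | base =>
    intro hj
    exact hccw (i + 1) (by omega) hj
  | succ k hk ih =>
    intro hj
    have h1 := (iff1 i k hi (by omega) (by omega) (by omega)).1 (ih (by omega))
    have h2 := (iff1 k (k + 1) (by omega) (by omega) (by omega) (by omega)).1
      (hccw (k + 1) (by omega) hj)
    exact (iff1 i (k + 1) hi (by omega) (by omega) (by omega)).2 (h1.trans h2)

/-- A vertex strictly between two others in the angular order lies strictly beyond their line. -/
lemma beyond {P : Set (E 2)} (hPc : Convex ℝ P) {a b c u : E 2} {h : ℝ}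
    (h0 : (0 : E 2) ∈ P) (ha : a ∈ P) (hb : b ∈ P) (hc : c ∈ Set.extremePoints ℝ P)
    (hac : 0 < det2 a c) (hcb : 0 < det2 c b) (hab : 0 < det2 a b)
    (hh : 0 < h) (hua : ⟪a, u⟫ = h) (hub : ⟪b, u⟫ = h) (huc : ⟪c, u⟫ ≤ h) : False := by
  have hcr := cramer a b c hab.ne'
  set s := det2 c b / det2 a b with hs
  set t := det2 a c / det2 a b with ht
  have hs0 : 0 < s := div_pos hcb hab
  have ht0 : 0 < t := div_pos hac hab
  have hst : s + t ≤ 1 := by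
    have h1 : ⟪c, u⟫ = (s + t) * h := by
      rw [hcr, inner_add_left, real_inner_smul_left, real_inner_smul_left, hua, hub]; ring
    rw [h1] at huc
    by_contra hcon
    nlinarith
  have hsub : ({0, a, b} : Set (E 2)) ⊆ P := by
    rintro x (rfl | rfl | rfl) <;> assumption
  refine not_mem_hull_of_extreme hPc hc hsub ?_ ?_
  · rintro (rfl | rfl | rfl)
    · simp [det2] at hac
    · rw [det2] at hac; linarith
    · rw [det2] at hcb; linarith
  · rw [hcr]; exact mem_hull_triple a b hs0.le ht0.le hst

/-- An edge in the frontier spans a supporting line. -/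
lemma edge_support {P : Set (E 2)} (hPc : Convex ℝ P)
    (hint : (interior P).Nonempty) (h0 : (0 : E 2) ∈ P) {a b : E 2} (ha : a ∈ P) (hb : b ∈ P)
    (hab : 0 < det2 a b) (hedge : segment ℝ a b ⊆ frontier P) :
    ∀ x ∈ P, ⟪x, rho (a - b)⟫ ≤ det2 a b := by
  have hm : midpoint ℝ a b ∈ frontier P := hedge (midpoint_mem_segment a b)
  obtain ⟨f, hf⟩ := geometric_hahn_banach_open_point hPc.interior isOpen_interior hm.2
  obtain ⟨z, hz⟩ := hint
  have hz' := hf z hz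
  have hle : ∀ x ∈ P, f x ≤ f (midpoint ℝ a b) := by
    intro x hx
    have hcl : x ∈ closure (interior P) := by
      rw [hPc.closure_interior_eq_closure_of_nonempty_interior ⟨z, hz⟩]; exact subset_closure hx
    exact closure_minimal (t := {x | f x ≤ f (midpoint ℝ a b)})
      (fun y hy => (hf y hy).le) (isClosed_le f.continuous continuous_const) hcl
  have hfm : f (midpoint ℝ a b) = (f a + f b) / 2 := by
    rw [midpoint_eq_smul_add, map_smul, map_add]; simp; ring
  have hfa := hle a ha
  have hfb := hle b hb
  have hf0 := hle 0 h0
  rw [map_zero] at hf0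
  have hba : f b = f a := by linarith
  have hma : f (midpoint ℝ a b) = f a := by linarith
  have hform : ∀ x, f x * det2 a b = f a * ⟪x, rho (a - b)⟫ := by
    intro x
    have := congrArg f (cramer a b x hab.ne')
    rw [map_add, map_smul, map_smul, hba] at this
    rw [this, inner_rho]
    simp only [smul_eq_mul]
    field_simp
    simp only [det2]; ring
  have hpos : 0 < f a := by
    rw [hma] at hf0 hz'
    rcases hf0.eq_or_lt with h | h
    · have := hform z
      rw [← h, zero_mul] at this
      rcases mul_eq_zero.1 this with h' | h'
      · linarith
      · linarith
    · exact h
  intro x hx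
  have h1 := hform x
  have h2 := hle x hx
  rw [hma] at h2
  by_contra hcon
  push Not at hcon
  nlinarith [mul_lt_mul_of_pos_left hcon hpos, mul_le_mul_of_nonneg_right h2 hab.le]

lemma normal_unique {a b u : E 2} {h : ℝ} (hh : 0 < h) (hu : ‖u‖ = 1) (hab : 0 < det2 a b)
    (ha : ⟪a, u⟫ = h) (hb : ⟪b, u⟫ = h) : ‖rho (a - b)‖⁻¹ • rho (a - b) = u := by
  have hn : rho (a - b) = (det2 a b / h) • u := by
    rw [inner2] at ha hb
    ext i
    fin_cases i
    · change rho (a - b) 0 = _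
      rw [rho_zero]
      simp only [PiLp.sub_apply, PiLp.smul_apply, smul_eq_mul, Fin.zero_eta, det2]
      field_simp
      linear_combination a 1 * hb - b 1 * ha
    · change rho (a - b) 1 = _
      rw [rho_one]
      simp only [PiLp.sub_apply, PiLp.smul_apply, smul_eq_mul, Fin.mk_one, det2]
      field_simp
      linear_combination b 0 * ha - a 0 * hb
  have hp : 0 < det2 a b / h := div_pos hab hh
  rw [hn, norm_smul, hu, Real.norm_eq_abs, abs_of_pos hp, mul_one, smul_smul,
    inv_mul_cancel₀ hp.ne', one_smul]

/-- in the plane, for `P = conv{0, v₁, …, v_r}` with `0` on the boundary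
and vertices labeled counter-clockwise, `fv_ζ(P) = (1/2) ρ V°_ζ(P)`. -/
theorem fv_eq_half_rho_V {ζ : ℝ → ℝ}
    (hζ : ∀ a b : ℝ, 0 ≤ a → 0 ≤ b → ζ (a + b) = ζ a + ζ b)
    (r : ℕ) (hr : 2 ≤ r) (v : ℕ → E 2)
    (P : Set (E 2)) (hPdef : P = convexHull ℝ ({0} ∪ v '' Set.Icc 1 r))
    (hdim : polyDim P = 2) (hbd : (0 : E 2) ∈ frontier P)
    (hvert : Set.extremePoints ℝ P = {0} ∪ v '' Set.Icc 1 r)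
    (hccw : ∀ i : ℕ, 2 ≤ i → i ≤ r → 0 < det2 (v (i - 1)) (v i))
    (hedge : ∀ i : ℕ, 2 ≤ i → i ≤ r → segment ℝ (v (i - 1)) (v i) ⊆ frontier P) :
    fv ζ P = (1 / 2 : ℝ) • act !![0, -1; 1, 0]
      (∑ i ∈ Finset.Icc 2 r,
        (ζ (det2 (v (i - 1)) (v i)) / det2 (v (i - 1)) (v i)) • (v (i - 1) - v i)) := by
  have hcpt : IsCompact P := by
    rw [hPdef]
    exact ((Set.finite_singleton _).union ((Set.finite_Icc 1 r).image v)).isCompact_convexHull ℝ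
  have hPc : Convex ℝ P := by rw [hPdef]; exact convex_convexHull ℝ _
  have h0e : (0 : E 2) ∈ Set.extremePoints ℝ P := by rw [hvert]; simp
  have h0P : (0 : E 2) ∈ P := h0e.1
  have hve : ∀ i, 1 ≤ i → i ≤ r → v i ∈ Set.extremePoints ℝ P := by
    intro i h1 h2; rw [hvert]; exact Or.inr ⟨i, ⟨h1, h2⟩, rfl⟩
  have hvP : ∀ i, 1 ≤ i → i ≤ r → v i ∈ P := fun i h1 h2 => (hve i h1 h2).1
  have hint : (interior P).Nonempty := by
    have htop : affineSpan ℝ P = ⊤ := by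
      rw [← AffineSubspace.direction_eq_top_iff_of_nonempty
        ⟨0, subset_affineSpan ℝ P h0P⟩]
      apply Submodule.eq_top_of_finrank_eq
      rw [finrank_euclideanSpace_fin]; exact hdim
    rw [hPdef] at htop ⊢
    rw [affineSpan_convexHull] at htop
    exact interior_convexHull_nonempty_iff_affineSpan_eq_top.2 htop
  have hang := angular hPc hvert hr hccw
  have hX : ∀ (a c b : ℕ) (u : E 2), 1 ≤ a → a < c → c < b → b ≤ r → 0 < suppFn P u →
      ⟪v a, u⟫ = suppFn P u → ⟪v b, u⟫ = suppFn P u → False := by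
    intro a c b u h1 h2 h3 h4 hh ha hb
    exact beyond hPc h0P (hvP a h1 (by omega)) (hvP b (by omega) h4)
      (hve c (by omega) (by omega)) (hang a c h1 h2 (by omega)) (hang c b (by omega) h3 h4)
      (hang a b h1 (by omega) h4) hh ha hb (le_suppFn hcpt u (hvP c (by omega) (by omega)))
  set n : ℕ → E 2 := fun i => rho (v (i - 1) - v i) with hn
  set U : ℕ → E 2 := fun i => ‖n i‖⁻¹ • n i with hU
  have hia : ∀ i, ⟪v (i - 1), n i⟫ = det2 (v (i - 1)) (v i) := by
    intro i; simp only [hn]; rw [inner_rho]; simp only [det2]; ring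
  have hib : ∀ i, ⟪v i, n i⟫ = det2 (v (i - 1)) (v i) := by
    intro i; simp only [hn]; rw [inner_rho]; simp only [det2]; ring
  have hN : ∀ i, 2 ≤ i → i ≤ r → 0 < ‖n i‖ := by
    intro i h1 h2
    rw [norm_pos_iff]
    intro h
    have := hccw i h1 h2
    rw [← hib i, h, inner_zero_right] at this
    exact lt_irrefl _ this
  have hiU : ∀ i x, ⟪x, U i⟫ = ‖n i‖⁻¹ * ⟪x, n i⟫ := by
    intro i x; simp only [hU]; rw [real_inner_smul_right]
  have hsupp : ∀ i, 2 ≤ i → i ≤ r → suppFn P (U i) = ‖n i‖⁻¹ * det2 (v (i - 1)) (v i) := by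
    intro i h1 h2
    rw [suppFn_eq (U i) (hvP i (by omega) h2), hiU, hib]
    intro y hy
    rw [hiU, hiU, hib]
    exact mul_le_mul_of_nonneg_left
      (edge_support hPc hint h0P (hvP (i - 1) (by omega) (by omega)) (hvP i (by omega) h2)
        (hccw i h1 h2) (hedge i h1 h2) y hy) (inv_nonneg.2 (norm_nonneg _))
  have hsp : ∀ i, 2 ≤ i → i ≤ r → 0 < suppFn P (U i) := by
    intro i h1 h2
    rw [hsupp i h1 h2]
    exact mul_pos (inv_pos.2 (hN i h1 h2)) (hccw i h1 h2)
  have hUa : ∀ i, 2 ≤ i → i ≤ r → ⟪v (i - 1), U i⟫ = suppFn P (U i) := by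
    intro i h1 h2; rw [hsupp i h1 h2, hiU, hia]
  have hUb : ∀ i, 2 ≤ i → i ≤ r → ⟪v i, U i⟫ = suppFn P (U i) := by
    intro i h1 h2; rw [hsupp i h1 h2, hiU, hib]
  have hface : ∀ i, 2 ≤ i → i ≤ r → face P (U i) = segment ℝ (v (i - 1)) (v i) := by
    intro i h1 h2
    apply Set.Subset.antisymm
    · apply face_subset hcpt hPc (U i) (convex_segment _ _)
      · rw [← convexHull_pair]
        exact ((Set.toFinite _).isCompact_convexHull ℝ).isClosed
      · intro x hx hxu
        rw [hvert] at hx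
        rcases hx with rfl | ⟨k, ⟨hk1, hk2⟩, rfl⟩
        · have := hsp i h1 h2
          rw [← hxu, inner_zero_left] at this
          exact absurd this (lt_irrefl _)
        · rcases Nat.lt_or_ge k (i - 1) with hk | hk
          · exact (hX k (i - 1) i (U i) hk1 hk (by omega) h2 (hsp i h1 h2) hxu
              (hUb i h1 h2)).elim
          · rcases Nat.lt_or_ge i k with hk' | hk'
            · exact (hX (i - 1) i k (U i) (by omega) (by omega) hk' hk2 (hsp i h1 h2)
                (hUa i h1 h2) hxu).elim
            · have : k = i - 1 ∨ k = i := by omega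
              rcases this with rfl | rfl
              · exact left_mem_segment ℝ _ _
              · exact right_mem_segment ℝ _ _
    · apply ((face_exposed hcpt (U i)).convex hPc).segment_subset
      · exact ⟨hvP _ (by omega) (by omega), hUa i h1 h2⟩
      · exact ⟨hvP _ (by omega) (by omega), hUb i h1 h2⟩
  have hcone : ∀ i, 2 ≤ i → i ≤ r → coneVol P (U i) = det2 (v (i - 1)) (v i) / 2 := by
    intro i h1 h2
    rw [coneVol, hface i h1 h2, ← convexHull_pair, convexHull_convexHull_union_right,
      Set.singleton_union]
    exact triangle_vol _ _ (hccw i h1 h2)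
  have hinj : ∀ i j, 2 ≤ i → i < j → j ≤ r → U i ≠ U j := by
    intro i j h1 h2 h3 h
    refine hX (i - 1) i j (U i) (by omega) (by omega) h2 h3 (hsp i h1 (by omega))
      (hUa i h1 (by omega)) ?_
    rw [h]; exact hUb j (by omega) h3
  have hInj : Set.InjOn U (Finset.Icc 2 r : Finset ℕ) := by
    intro i hi j hj h
    simp only [Finset.coe_Icc, Set.mem_Icc] at hi hj
    rcases lt_trichotomy i j with h' | h' | h'
    · exact absurd h (hinj i j hi.1 h' hj.2)
    · exact h'
    · exact absurd h.symm (hinj j i hj.1 h' hi.2)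
  have hgood : goodNormals P = U '' (Finset.Icc 2 r : Finset ℕ) := by
    ext u
    constructor
    · rintro ⟨⟨hu1, hu2⟩, hu3⟩
      have hs0 : 0 < suppFn P u := by
        have hle : 0 ≤ suppFn P u := by
          have := le_suppFn hcpt u h0P
          rwa [inner_zero_left] at this
        refine lt_of_le_of_ne hle fun h => hu3 (subset_affineSpan ℝ _ ⟨h0P, ?_⟩)
        rw [inner_zero_left]; exact h
      have hex : ∃ i j, 1 ≤ i ∧ i < j ∧ j ≤ r ∧ ⟪v i, u⟫ = suppFn P u ∧
          ⟪v j, u⟫ = suppFn P u := by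
        by_contra hcon
        have hsubs : (face P u).Subsingleton := by
          by_cases hone : ∃ i, 1 ≤ i ∧ i ≤ r ∧ ⟪v i, u⟫ = suppFn P u
          · obtain ⟨i, hi1, hi2, hi3⟩ := hone
            refine Set.Subsingleton.anti (Set.subsingleton_singleton (a := v i)) ?_
            apply face_subset hcpt hPc u (convex_singleton _) isClosed_singleton
            intro x hx hxu
            rw [hvert] at hx
            rcases hx with rfl | ⟨k, ⟨hk1, hk2⟩, rfl⟩
            · rw [inner_zero_left] at hxu; exact absurd hxu hs0.ne
            · rcases lt_trichotomy i k with h' | h' | h'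
              · exact absurd ⟨i, k, hi1, h', hk2, hi3, hxu⟩ hcon
              · rw [h']; rfl
              · exact absurd ⟨k, i, hk1, h', hi2, hxu, hi3⟩ hcon
          · refine Set.Subsingleton.anti Set.subsingleton_empty ?_
            apply face_subset hcpt hPc u convex_empty isClosed_empty
            intro x hx hxu
            rw [hvert] at hx
            rcases hx with rfl | ⟨k, ⟨hk1, hk2⟩, rfl⟩
            · rw [inner_zero_left] at hxu; exact absurd hxu hs0.ne
            · exact absurd ⟨k, hk1, hk2, hxu⟩ hone
        rw [polyDim, direction_affineSpan, vectorSpan_of_subsingleton ℝ hsubs,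
          finrank_bot] at hu2
        omega
      obtain ⟨i, j, hi, hij, hj, hui, huj⟩ := hex
      have hj' : j = i + 1 := by
        by_contra hne
        exact hX i (i + 1) j u hi (by omega) (by omega) hj hs0 hui huj
      subst hj'
      refine ⟨i + 1, by simp; omega, ?_⟩
      exact normal_unique hs0 hu1 (hang i (i + 1) hi hij hj) hui huj
    · rintro ⟨i, hi, rfl⟩
      simp only [Finset.coe_Icc, Set.mem_Icc] at hi
      obtain ⟨h1, h2⟩ := hi
      refine ⟨⟨?_, ?_⟩, ?_⟩
      · simp only [hU]
        rw [norm_smul, norm_inv, norm_norm, inv_mul_cancel₀ (hN i h1 h2).ne']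
      · rw [polyDim, hface i h1 h2, ← convexHull_pair, affineSpan_convexHull,
          direction_affineSpan, vectorSpan_pair, finrank_span_singleton]
        rw [vsub_eq_sub, sub_ne_zero]
        intro h
        have := hccw i h1 h2
        rw [h, det2] at this
        linarith
      · intro hmem
        have hsub : affineSpan ℝ (face P (U i)) ≤
            AffineSubspace.mk' (v i) (LinearMap.ker (innerSL ℝ (U i)).toLinearMap) := by
          rw [affineSpan_le]
          intro x hx
          have hx2 := hx.2
          have hb2 := hUb i h1 h2
          rw [SetLike.mem_coe, AffineSubspace.mem_mk']
          simp only [vsub_eq_sub, LinearMap.mem_ker, ContinuousLinearMap.coe_coe,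
            innerSL_apply_apply, inner_sub_right]
          rw [real_inner_comm, hx2, real_inner_comm, hb2, sub_self]
        have h3 := hsub hmem
        rw [AffineSubspace.mem_mk'] at h3
        simp only [vsub_eq_sub, LinearMap.mem_ker, ContinuousLinearMap.coe_coe,
            innerSL_apply_apply, inner_sub_right, inner_zero_right] at h3
        rw [real_inner_comm, hUb i h1 h2] at h3
        have := hsp i h1 h2
        linarith
  rw [fv, hgood, finsum_mem_image hInj, finsum_mem_coe_finset, map_sum, Finset.smul_sum]
  apply Finset.sum_congr rfl
  intro i hi
  obtain ⟨h1, h2⟩ := Finset.mem_Icc.1 hi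
  have hD := hccw i h1 h2
  have hNi := hN i h1 h2
  rw [hcone i h1 h2, hsupp i h1 h2, map_smul]
  change _ • (‖n i‖⁻¹ • n i) = (1 / 2 : ℝ) • _ • n i
  have hz := hζ (det2 (v (i - 1)) (v i) / 2) (det2 (v (i - 1)) (v i) / 2)
    (by positivity) (by positivity)
  rw [add_halves] at hz
  rw [hz, smul_smul, smul_smul]
  congr 1
  field_simp
  ring
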